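/- arXiv:2102.07103 — 4 statements merged into one kernel-verified Lean document; each statement's English description precedes it below -/
import Mathlib

section
/- Let n ≥ 2 and let E ⊆ ℝⁿ be a compact set with nonempty interior. Then there exists a sequence of unit vectors (u_i)_{i≥1} such that, setting E_i = S_{u_i}S_{u_{i-1}}⋯S_{u_1}E, some subsequence (E_{i_j}) converges in the Hausdorff distance to the closed Euclidean ball centered at the origin whose Lebesgue measure equals that of E. -/
open MeasureTheory Filter Metric

/-- Orthogonal projection of `ℝⁿ` onto the hyperplane `u^⊥` through the origin. -/
noncomputable def steinerProj {n : ℕ} (u : EuclideanSpace ℝ (Fin n)) :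
    EuclideanSpace ℝ (Fin n) → EuclideanSpace ℝ (Fin n) :=
  fun z => ((Submodule.orthogonalProjectionOnto (Submodule.span ℝ {u})ᗮ) z : EuclideanSpace ℝ (Fin n))

/-- `ℓ_{E,u}(x')` : the one-dimensional Lebesgue measure of `{t : x' + t u ∈ E}`. -/
noncomputable def steinerLen {n : ℕ} (u : EuclideanSpace ℝ (Fin n))
    (E : Set (EuclideanSpace ℝ (Fin n))) (x' : EuclideanSpace ℝ (Fin n)) : ℝ :=
  (volume {t : ℝ | x' + t • u ∈ E}).toReal

/-- Steiner symmetrization of `E` about the hyperplane `u^⊥`: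
`S_u E = {x' + t u : x' ∈ π_u(E), |t| ≤ ℓ_{E,u}(x')/2}`. -/
noncomputable def steiner {n : ℕ} (u : EuclideanSpace ℝ (Fin n))
    (E : Set (EuclideanSpace ℝ (Fin n))) : Set (EuclideanSpace ℝ (Fin n)) :=
  {x | ∃ x' ∈ steinerProj u '' E, ∃ t : ℝ, |t| ≤ steinerLen u E x' / 2 ∧ x = x' + t • u}

/-- The last standard basis vector `e_n` of `ℝⁿ` (junk value `0` if `n = 0`). -/
noncomputable def lastDir (n : ℕ) : EuclideanSpace ℝ (Fin n) :=
  if h : n = 0 then 0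
  else EuclideanSpace.single ⟨n - 1, Nat.sub_lt (Nat.pos_of_ne_zero h) one_pos⟩ 1

/-- `max_{x ∈ E} |x|` for a (nonempty compact) set `E ⊆ ℝⁿ`. -/
noncomputable def maxNorm {n : ℕ} (E : Set (EuclideanSpace ℝ (Fin n))) : ℝ :=
  sSup ((fun x => ‖x‖) '' E)

lemma steinerProj_eq {n : ℕ} {u : EuclideanSpace ℝ (Fin n)} (hu : ‖u‖ = 1)
    (x : EuclideanSpace ℝ (Fin n)) : steinerProj u x = x - inner ℝ u x • u := by
  simp [steinerProj, Submodule.starProjection_unit_singleton ℝ hu]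

lemma inner_self_of_unit {n : ℕ} {u : EuclideanSpace ℝ (Fin n)} (hu : ‖u‖ = 1) :
    inner ℝ u u = (1 : ℝ) := by
  rw [real_inner_self_eq_norm_sq, hu, one_pow]

lemma volume_line_add_smul {n : ℕ} (u : EuclideanSpace ℝ (Fin n))
    (A : Set (EuclideanSpace ℝ (Fin n))) (x : EuclideanSpace ℝ (Fin n)) (c : ℝ) :
    volume {t : ℝ | x + c • u + t • u ∈ A} = volume {t : ℝ | x + t • u ∈ A} := by
  have h : {t : ℝ | x + c • u + t • u ∈ A} = (fun t => c + t) ⁻¹' {t : ℝ | x + t • u ∈ A} := by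
    ext t
    simp [add_smul, add_assoc]
  rw [h, measure_preimage_add]

lemma steinerLen_add_smul {n : ℕ} (u : EuclideanSpace ℝ (Fin n))
    (A : Set (EuclideanSpace ℝ (Fin n))) (x : EuclideanSpace ℝ (Fin n)) (c : ℝ) :
    steinerLen u A (x + c • u) = steinerLen u A x := by
  rw [steinerLen, volume_line_add_smul, steinerLen]

lemma steinerLen_sub_smul {n : ℕ} (u : EuclideanSpace ℝ (Fin n))
    (A : Set (EuclideanSpace ℝ (Fin n))) (x : EuclideanSpace ℝ (Fin n)) (c : ℝ) :
    steinerLen u A (x - c • u) = steinerLen u A x := by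
  rw [sub_eq_add_neg, ← neg_smul, steinerLen_add_smul]

lemma steinerProj_mem_image_iff {n : ℕ} {u : EuclideanSpace ℝ (Fin n)} (hu : ‖u‖ = 1)
    {A : Set (EuclideanSpace ℝ (Fin n))} {x : EuclideanSpace ℝ (Fin n)} :
    steinerProj u x ∈ steinerProj u '' A ↔ ∃ s : ℝ, x + s • u ∈ A := by
  simp only [Set.mem_image, steinerProj_eq hu]
  constructor
  · rintro ⟨y, hy, hyx⟩
    refine ⟨inner ℝ u y - inner ℝ u x, ?_⟩
    convert hy using 1
    rw [sub_smul, ← sub_eq_zero] at *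
    rw [← neg_eq_zero, ← hyx]
    abel
  · rintro ⟨s, hs⟩
    refine ⟨_, hs, ?_⟩
    rw [inner_add_right, inner_smul_right, inner_self_of_unit hu, add_smul]
    module

lemma mem_steiner_iff {n : ℕ} {u : EuclideanSpace ℝ (Fin n)} (hu : ‖u‖ = 1)
    {A : Set (EuclideanSpace ℝ (Fin n))} {x : EuclideanSpace ℝ (Fin n)} :
    x ∈ steiner u A ↔ (∃ s : ℝ, x + s • u ∈ A) ∧ 2 * |inner ℝ u x| ≤ steinerLen u A x := by
  constructor
  · rintro ⟨_, ⟨y, hy, rfl⟩, t, ht, rfl⟩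
    rw [steinerProj_eq hu] at *
    refine ⟨⟨inner ℝ u y - t, ?_⟩, ?_⟩
    · convert hy using 1
      module
    · rw [steinerLen_add_smul, inner_add_right, inner_sub_right, inner_smul_right,
        inner_smul_right, inner_self_of_unit hu]
      simp only [mul_one, sub_self, zero_add]
      linarith
  · rintro ⟨hs, hl⟩
    refine ⟨steinerProj u x, (steinerProj_mem_image_iff hu).2 hs, inner ℝ u x, ?_, ?_⟩
    · rw [steinerProj_eq hu, steinerLen_sub_smul]
      linarith
    · rw [steinerProj_eq hu]
      module

lemma norm_add_smul_sq {n : ℕ} {u : EuclideanSpace ℝ (Fin n)} (hu : ‖u‖ = 1)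
    (x : EuclideanSpace ℝ (Fin n)) (t : ℝ) :
    ‖x + t • u‖ ^ 2 = ‖x‖ ^ 2 - inner ℝ u x ^ 2 + (t + inner ℝ u x) ^ 2 := by
  rw [norm_add_sq_real, inner_smul_right, norm_smul, hu, real_inner_comm, Real.norm_eq_abs,
    mul_one, sq_abs]
  ring

lemma line_subset_Icc {n : ℕ} {u : EuclideanSpace ℝ (Fin n)} (hu : ‖u‖ = 1)
    {A : Set (EuclideanSpace ℝ (Fin n))} {R : ℝ} (hA : A ⊆ closedBall 0 R)
    (x : EuclideanSpace ℝ (Fin n)) :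
    {t : ℝ | x + t • u ∈ A} ⊆ Set.Icc
      (-inner ℝ u x - √(R ^ 2 - (‖x‖ ^ 2 - inner ℝ u x ^ 2)))
      (-inner ℝ u x + √(R ^ 2 - (‖x‖ ^ 2 - inner ℝ u x ^ 2))) := by
  intro t ht
  have h1 : ‖x + t • u‖ ≤ R := by simpa using hA ht
  have h2 : ‖x + t • u‖ ^ 2 ≤ R ^ 2 := pow_le_pow_left₀ (norm_nonneg _) h1 2
  rw [norm_add_smul_sq hu] at h2
  have h3 := Real.abs_le_sqrt (show (t + inner ℝ u x) ^ 2 ≤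
    R ^ 2 - (‖x‖ ^ 2 - inner ℝ u x ^ 2) by linarith)
  rw [abs_le] at h3
  exact ⟨by linarith [h3.1], by linarith [h3.2]⟩

lemma volume_line_ne_top {n : ℕ} {u : EuclideanSpace ℝ (Fin n)} (hu : ‖u‖ = 1)
    {A : Set (EuclideanSpace ℝ (Fin n))} {R : ℝ} (hA : A ⊆ closedBall 0 R)
    (x : EuclideanSpace ℝ (Fin n)) : volume {t : ℝ | x + t • u ∈ A} ≠ ⊤ :=
  measure_ne_top_of_subset (line_subset_Icc hu hA x) measure_Icc_lt_top.ne

lemma steinerLen_mono_of_line {n : ℕ} {u : EuclideanSpace ℝ (Fin n)} (hu : ‖u‖ = 1)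
    {A A' : Set (EuclideanSpace ℝ (Fin n))} {R : ℝ} (hA : A ⊆ closedBall 0 R)
    {x : EuclideanSpace ℝ (Fin n)}
    (h : volume {t : ℝ | x + t • u ∈ A'} ≤ volume {t : ℝ | x + t • u ∈ A}) :
    steinerLen u A' x ≤ steinerLen u A x :=
  ENNReal.toReal_mono (volume_line_ne_top hu hA x) h

lemma steiner_subset_closedBall {n : ℕ} {u : EuclideanSpace ℝ (Fin n)} (hu : ‖u‖ = 1)
    {A : Set (EuclideanSpace ℝ (Fin n))} {R : ℝ} (hA : A ⊆ closedBall 0 R) :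
    steiner u A ⊆ closedBall 0 R := by
  intro x hx
  obtain ⟨⟨s, hs⟩, hl⟩ := (mem_steiner_iff hu).1 hx
  have hR : 0 ≤ R := (norm_nonneg _).trans (by simpa using hA hs)
  have hsR : ‖x + s • u‖ ≤ R := by simpa using hA hs
  have h2 : ‖x + s • u‖ ^ 2 ≤ R ^ 2 := pow_le_pow_left₀ (norm_nonneg _) hsR 2
  rw [norm_add_smul_sq hu] at h2
  have h3 : steinerLen u A x ≤ 2 * √(R ^ 2 - (‖x‖ ^ 2 - inner ℝ u x ^ 2)) := by
    refine (ENNReal.toReal_mono measure_Icc_lt_top.ne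
      (measure_mono (line_subset_Icc hu hA x))).trans ?_
    rw [Real.volume_Icc, ENNReal.toReal_ofReal]
    · linarith
    · linarith [Real.sqrt_nonneg (R ^ 2 - (‖x‖ ^ 2 - inner ℝ u x ^ 2))]
  have h4 : |inner ℝ u x| ≤ √(R ^ 2 - (‖x‖ ^ 2 - inner ℝ u x ^ 2)) := by linarith
  have h6 : inner ℝ u x ^ 2 ≤ R ^ 2 - (‖x‖ ^ 2 - inner ℝ u x ^ 2) :=
    Real.sq_le (by nlinarith [sq_nonneg (s + inner ℝ u x)]) |>.2 (abs_le.1 h4)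
  rw [mem_closedBall_zero_iff]
  exact abs_le_of_sq_le_sq' (by linarith) hR |>.2

lemma steiner_subset_steiner {n : ℕ} {u : EuclideanSpace ℝ (Fin n)} (hu : ‖u‖ = 1)
    {A A' : Set (EuclideanSpace ℝ (Fin n))} {R : ℝ} (hA : A ⊆ closedBall 0 R)
    (hne : ∀ x, (∃ s : ℝ, x + s • u ∈ A') → ∃ s : ℝ, x + s • u ∈ A)
    (hvol : ∀ x, volume {t : ℝ | x + t • u ∈ A'} ≤ volume {t : ℝ | x + t • u ∈ A}) :
    steiner u A' ⊆ steiner u A := by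
  intro x hx
  rw [mem_steiner_iff hu] at *
  exact ⟨hne x hx.1, hx.2.trans (steinerLen_mono_of_line hu hA (hvol x))⟩

lemma volume_line_steiner {n : ℕ} {u : EuclideanSpace ℝ (Fin n)} (hu : ‖u‖ = 1)
    {A : Set (EuclideanSpace ℝ (Fin n))} {R : ℝ} (hA : A ⊆ closedBall 0 R)
    (x : EuclideanSpace ℝ (Fin n)) :
    volume {t : ℝ | x + t • u ∈ steiner u A} = volume {t : ℝ | x + t • u ∈ A} := by
  by_cases h : ∃ s : ℝ, x + s • u ∈ A
  · obtain ⟨s, hs⟩ := h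
    have key : {t : ℝ | x + t • u ∈ steiner u A} =
        Set.Icc (-inner ℝ u x - steinerLen u A x / 2) (-inner ℝ u x + steinerLen u A x / 2) := by
      ext t
      have hex : ∃ s : ℝ, x + t • u + s • u ∈ A := ⟨s - t, by convert hs using 1; module⟩
      simp only [Set.mem_ofPred_eq, mem_steiner_iff hu, hex, true_and, steinerLen_add_smul,
        inner_add_right, inner_smul_right, inner_self_of_unit hu, mul_one, Set.mem_Icc]
      rw [← le_div_iff₀' two_pos, abs_le]
      constructor <;> rintro ⟨h1, h2⟩ <;> constructor <;> linarith
    rw [key, Real.volume_Icc, ← ENNReal.ofReal_toReal (volume_line_ne_top hu hA x)]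
    congr 1
    rw [steinerLen]
    ring
  · have h1 : {t : ℝ | x + t • u ∈ steiner u A} = ∅ := by
      ext t
      simp only [Set.mem_ofPred_eq, mem_steiner_iff hu, Set.mem_empty_iff_false, iff_false]
      rintro ⟨⟨s, hs⟩, -⟩
      exact h ⟨t + s, by convert hs using 1; module⟩
    have h2 : {t : ℝ | x + t • u ∈ A} = ∅ := by
      ext t
      simpa using fun ht => h ⟨t, ht⟩
    rw [h1, h2]

lemma continuous_steinerProj {n : ℕ} (u : EuclideanSpace ℝ (Fin n)) :
    Continuous (steinerProj u) :=
  continuous_subtype_val.comp (ContinuousLinearMap.continuous _)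

lemma tendsto_steinerLen_cthickening {n : ℕ} {u : EuclideanSpace ℝ (Fin n)} (hu : ‖u‖ = 1)
    {A : Set (EuclideanSpace ℝ (Fin n))} (hA : IsCompact A) (x : EuclideanSpace ℝ (Fin n)) :
    Tendsto (fun δ => steinerLen u (cthickening δ A) x) (nhds 0) (nhds (steinerLen u A x)) := by
  have hmeas : Measurable fun t : ℝ => x + t • u := by fun_prop
  have hmap : ∀ S : Set (EuclideanSpace ℝ (Fin n)), IsClosed S →
      (volume.map fun t : ℝ => x + t • u) S = volume {t : ℝ | x + t • u ∈ S} :=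
    fun S hS => Measure.map_apply hmeas hS.measurableSet
  obtain ⟨R, hR⟩ := (hA.cthickening (r := 1)).isBounded.subset_closedBall 0
  have h := tendsto_measure_cthickening_of_isClosed
    (μ := volume.map fun t : ℝ => x + t • u) (s := A)
    ⟨1, one_pos, by
      rw [hmap _ isClosed_cthickening]
      exact volume_line_ne_top hu hR x⟩ hA.isClosed
  rw [hmap _ hA.isClosed] at h
  simp only [hmap _ isClosed_cthickening] at h
  exact (ENNReal.tendsto_toReal (volume_line_ne_top hu
    ((self_subset_cthickening A).trans hR) x)).comp h

lemma isCompact_steiner {n : ℕ} {u : EuclideanSpace ℝ (Fin n)} (hu : ‖u‖ = 1)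
    {A : Set (EuclideanSpace ℝ (Fin n))} (hA : IsCompact A) : IsCompact (steiner u A) := by
  obtain ⟨R, hR⟩ := hA.isBounded.subset_closedBall 0
  refine (isCompact_closedBall 0 R).of_isClosed_subset ?_ (steiner_subset_closedBall hu hR)
  refine isClosed_of_closure_subset fun x hx => ?_
  have hproj : IsClosed (steinerProj u ⁻¹' (steinerProj u '' A)) :=
    (hA.image (continuous_steinerProj u)).isClosed.preimage (continuous_steinerProj u)
  have hsub : steiner u A ⊆ steinerProj u ⁻¹' (steinerProj u '' A) := fun y hy =>
    (steinerProj_mem_image_iff hu).2 ((mem_steiner_iff hu).1 hy).1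
  refine (mem_steiner_iff hu).2
    ⟨(steinerProj_mem_image_iff hu).1 (closure_minimal hsub hproj hx), ?_⟩
  have hbound : ∀ δ > 0,
      2 * |inner ℝ u x| ≤ 2 * δ + steinerLen u (cthickening δ A) x := by
    intro δ hδ
    obtain ⟨y, hy, hxy⟩ := Metric.mem_closure_iff.1 hx δ hδ
    have hl := ((mem_steiner_iff hu).1 hy).2
    have h1 : steinerLen u A y ≤ steinerLen u (cthickening δ A) x := by
      obtain ⟨R', hR'⟩ := (hA.cthickening (r := δ)).isBounded.subset_closedBall 0
      refine ENNReal.toReal_mono (volume_line_ne_top hu hR' x) (measure_mono fun t ht => ?_)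
      refine mem_cthickening_of_dist_le _ _ _ _ ht ?_
      simpa using hxy.le
    have h2 : |inner ℝ u x| ≤ |inner ℝ u y| + δ := by
      have h3 : |inner ℝ u (x - y)| ≤ ‖u‖ * ‖x - y‖ := abs_real_inner_le_norm u (x - y)
      rw [hu, one_mul, ← dist_eq_norm, inner_sub_right] at h3
      linarith [abs_sub_abs_le_abs_sub (inner ℝ u x) (inner ℝ u y)]
    linarith
  have hlim : Tendsto (fun δ => 2 * δ + steinerLen u (cthickening δ A) x)
      (nhdsWithin 0 (Set.Ioi 0)) (nhds (2 * 0 + steinerLen u A x)) :=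
    ((tendsto_id.const_mul 2).add (tendsto_steinerLen_cthickening hu hA x)).mono_left
      nhdsWithin_le_nhds
  rw [mul_zero, zero_add] at hlim
  exact ge_of_tendsto hlim (eventually_mem_nhdsWithin.mono hbound)

/-! ### Measure comparison along parallel lines -/

lemma volume_eq_setLIntegral_line {n : ℕ} {u : EuclideanSpace ℝ (Fin n)} (hu : ‖u‖ = 1)
    {A : Set (EuclideanSpace ℝ (Fin n))} (hA : MeasurableSet A) :
    volume A = ∫⁻ x in {x | inner ℝ u x ∈ Set.Icc (0 : ℝ) 1},
      volume {t : ℝ | x + t • u ∈ A} := by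
  have hinner : Measurable fun x : EuclideanSpace ℝ (Fin n) => (inner ℝ u x : ℝ) := by fun_prop
  have hslab : MeasurableSet {x : EuclideanSpace ℝ (Fin n) | inner ℝ u x ∈ Set.Icc (0 : ℝ) 1} :=
    hinner measurableSet_Icc
  set T : Set (EuclideanSpace ℝ (Fin n) × ℝ) :=
    {p | inner ℝ u p.1 ∈ Set.Icc (0 : ℝ) 1 ∧ p.1 + p.2 • u ∈ A} with hT
  have hTm : MeasurableSet T := by
    refine MeasurableSet.inter ?_ ?_
    · exact (hinner.comp measurable_fst) measurableSet_Icc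
    · exact (by fun_prop : Measurable fun p : EuclideanSpace ℝ (Fin n) × ℝ => p.1 + p.2 • u) hA
  set T' : Set (EuclideanSpace ℝ (Fin n) × ℝ) :=
    {p | p.1 ∈ A ∧ inner ℝ u p.1 - p.2 ∈ Set.Icc (0 : ℝ) 1} with hT'
  have hTm' : MeasurableSet T' := by
    refine MeasurableSet.inter (measurable_fst hA) ?_
    exact ((hinner.comp measurable_fst).sub measurable_snd) measurableSet_Icc
  have h1 : (volume.prod volume) T = ∫⁻ x in {x | inner ℝ u x ∈ Set.Icc (0 : ℝ) 1},
      volume {t : ℝ | x + t • u ∈ A} := by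
    rw [Measure.prod_apply hTm, ← lintegral_indicator hslab]
    refine lintegral_congr fun x => ?_
    by_cases hx : x ∈ {x : EuclideanSpace ℝ (Fin n) | inner ℝ u x ∈ Set.Icc (0 : ℝ) 1}
    · rw [Set.indicator_of_mem hx]
      congr 1
      ext t
      exact and_iff_right hx
    · rw [Set.indicator_of_notMem hx]
      convert measure_empty (μ := volume)
      ext t
      simp only [Set.mem_preimage, Set.mem_empty_iff_false, iff_false]
      exact fun h => hx h.1
  have h2 : (volume.prod volume) T = (volume.prod volume) T' := by
    rw [Measure.prod_apply_symm hTm, Measure.prod_apply_symm hTm']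
    refine lintegral_congr fun t => ?_
    have : (fun x => (x, t)) ⁻¹' T = (fun x => x + t • u) ⁻¹' ((fun x => (x, t)) ⁻¹' T') := by
      ext x
      simp [hT, hT', inner_add_right, inner_smul_right, and_comm, hu]
    rw [this, measure_preimage_add_right]
  have h3 : (volume.prod volume) T' = volume A := by
    rw [Measure.prod_apply hTm', ← lintegral_indicator_one hA]
    refine lintegral_congr fun x => ?_
    by_cases hx : x ∈ A
    · rw [Set.indicator_of_mem hx]
      have : Prod.mk x ⁻¹' T' = Set.Icc (inner ℝ u x - 1) (inner ℝ u x) := by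
        ext t
        simp only [hT', Set.mem_preimage, Set.mem_ofPred_eq, hx, true_and, Set.mem_Icc]
        constructor <;> rintro ⟨h1, h2⟩ <;> constructor <;> linarith
      rw [this, Real.volume_Icc]
      simp
    · rw [Set.indicator_of_notMem hx]
      convert measure_empty (μ := volume)
      ext t
      simp only [Set.mem_preimage, Set.mem_empty_iff_false, iff_false]
      exact fun h => hx h.1
  rw [← h3, ← h2, h1]

lemma volume_mono_of_line {n : ℕ} {u : EuclideanSpace ℝ (Fin n)} (hu : ‖u‖ = 1)
    {A A' : Set (EuclideanSpace ℝ (Fin n))} (hA : MeasurableSet A) (hA' : MeasurableSet A')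
    (h : ∀ x, volume {t : ℝ | x + t • u ∈ A} ≤ volume {t : ℝ | x + t • u ∈ A'}) :
    volume A ≤ volume A' := by
  rw [volume_eq_setLIntegral_line hu hA, volume_eq_setLIntegral_line hu hA']
  exact lintegral_mono h

lemma volume_steiner {n : ℕ} {u : EuclideanSpace ℝ (Fin n)} (hu : ‖u‖ = 1)
    {A : Set (EuclideanSpace ℝ (Fin n))} (hA : IsCompact A) :
    volume (steiner u A) = volume A := by
  obtain ⟨R, hR⟩ := hA.isBounded.subset_closedBall 0
  rw [volume_eq_setLIntegral_line hu (isCompact_steiner hu hA).measurableSet,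
    volume_eq_setLIntegral_line hu hA.measurableSet]
  exact lintegral_congr fun x => volume_line_steiner hu hR x

lemma volume_inter_add_le_volume_steiner_inter {n : ℕ} {u : EuclideanSpace ℝ (Fin n)}
    (hu : ‖u‖ = 1) {A W : Set (EuclideanSpace ℝ (Fin n))} (hA : IsCompact A) {s c : ℝ}
    (hW : MeasurableSet W) (hWB : W ⊆ closedBall 0 s \ A)
    (hWA : ∀ w ∈ W, w + c • u ∈ A \ closedBall 0 s) :
    volume (A ∩ closedBall 0 s) + volume W ≤ volume (steiner u A ∩ closedBall 0 s) := by
  obtain ⟨R, hR⟩ := hA.isBounded.subset_closedBall 0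
  have hdisj : Disjoint (A ∩ closedBall 0 s) W :=
    Set.disjoint_left.2 fun x hx hxW => (hWB hxW).2 hx.1
  have hAB : MeasurableSet (A ∩ closedBall 0 s) := hA.measurableSet.inter measurableSet_closedBall
  rw [← measure_union hdisj hW]
  have hsub : A ∩ closedBall 0 s ∪ W ⊆ closedBall 0 s :=
    Set.union_subset Set.inter_subset_right fun x hx => (hWB hx).1
  have hmono : steiner u (A ∩ closedBall 0 s ∪ W) ⊆ steiner u A := by
    refine steiner_subset_steiner hu hR ?_ fun x => ?_
    · rintro x ⟨t, ht | ht⟩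
      · exact ⟨t, ht.1⟩
      · exact ⟨t + c, by convert (hWA _ ht).1 using 1; module⟩
    · have hmeas : Measurable fun t : ℝ => x + t • u := by fun_prop
      have hB : MeasurableSet {t : ℝ | x + t • u ∈ closedBall 0 s} :=
        hmeas measurableSet_closedBall
      have hWx : volume {t : ℝ | x + t • u ∈ W} ≤
          volume ({t : ℝ | x + t • u ∈ A} \ {t : ℝ | x + t • u ∈ closedBall 0 s}) := by
        rw [← measure_preimage_add_right volume c
          ({t : ℝ | x + t • u ∈ A} \ {t : ℝ | x + t • u ∈ closedBall 0 s})]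
        refine measure_mono fun t ht => ?_
        have := hWA _ ht
        rwa [add_assoc, ← add_smul] at this
      rw [← measure_inter_add_sdiff {t : ℝ | x + t • u ∈ A} hB]
      exact (measure_union_le {t : ℝ | x + t • u ∈ A ∩ closedBall 0 s} _).trans
        (add_le_add_right hWx _)
  refine volume_mono_of_line hu (hAB.union hW)
    ((isCompact_steiner hu hA).measurableSet.inter measurableSet_closedBall) fun x => ?_
  rw [← volume_line_steiner hu hsub x]
  exact measure_mono fun t ht => ⟨hmono ht, steiner_subset_closedBall hu hsub ht⟩

/-! ### Parallel bodies -/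

lemma volume_add_le_of_Icc_subset {K T : Set ℝ} (hK : IsCompact K) (hne : K.Nonempty) {w : ℝ}
    (hw : 0 ≤ w) (h : ∀ k ∈ K, Set.Icc (k - w) (k + w) ⊆ T) :
    volume K + ENNReal.ofReal (2 * w) ≤ volume T := by
  have ha := h _ (hK.sInf_mem hne)
  have hb := h _ (hK.sSup_mem hne)
  have hlow : ∀ k ∈ K, sInf K ≤ k := fun k hk => csInf_le hK.bddBelow hk
  have hupp : ∀ k ∈ K, k ≤ sSup K := fun k hk => le_csSup hK.bddAbove hk
  have hd1 : Disjoint K (Set.Ico (sInf K - w) (sInf K)) :=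
    Set.disjoint_left.2 fun k hk hk' => (hlow k hk).not_gt hk'.2
  have hd2 : Disjoint (K ∪ Set.Ico (sInf K - w) (sInf K)) (Set.Ioc (sSup K) (sSup K + w)) := by
    refine Set.disjoint_left.2 ?_
    rintro k (hk | hk) hk'
    · exact (hupp k hk).not_gt hk'.1
    · exact (hupp _ (hK.sInf_mem hne)).not_gt (hk'.1.trans hk.2)
  calc volume K + ENNReal.ofReal (2 * w)
      = volume (K ∪ Set.Ico (sInf K - w) (sInf K) ∪ Set.Ioc (sSup K) (sSup K + w)) := by
        rw [measure_union hd2 measurableSet_Ioc, measure_union hd1 measurableSet_Ico,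
          Real.volume_Ico, Real.volume_Ioc, add_assoc, two_mul, ENNReal.ofReal_add hw hw]
        congr 3 <;> ring
    _ ≤ volume T := by
        refine measure_mono ?_
        rintro k ((hk | hk) | hk)
        · exact h k hk ⟨by linarith, by linarith⟩
        · exact ha ⟨hk.1, by linarith [hk.2]⟩
        · exact hb ⟨by linarith [hk.1], hk.2⟩

lemma closedBall_subset_steiner {n : ℕ} {u : EuclideanSpace ℝ (Fin n)} (hu : ‖u‖ = 1)
    {E A : Set (EuclideanSpace ℝ (Fin n))} (hE : IsCompact E) (hA : IsCompact A) {ρ : ℝ}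
    (h : ∀ x ∈ E, closedBall x ρ ⊆ A) : ∀ x ∈ steiner u E, closedBall x ρ ⊆ steiner u A := by
  intro x hx y hy
  obtain ⟨⟨s, hs⟩, hl⟩ := (mem_steiner_iff hu).1 hx
  obtain ⟨R, hR⟩ := hA.isBounded.subset_closedBall 0
  obtain ⟨RE, hRE⟩ := hE.isBounded.subset_closedBall 0
  set z := y - x with hz
  have hzρ : ‖z‖ ≤ ρ := by simpa [dist_eq_norm] using hy
  have hρ : 0 ≤ ρ := (norm_nonneg _).trans hzρ
  set τ : ℝ := inner ℝ u z with hτ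
  have hz2 : ‖z‖ ^ 2 ≤ ρ ^ 2 := pow_le_pow_left₀ (norm_nonneg _) hzρ 2
  set w := √(ρ ^ 2 - (‖z‖ ^ 2 - τ ^ 2)) with hwdef
  have hτw : |τ| ≤ w := Real.abs_le_sqrt (by linarith)
  have hw : 0 ≤ w := Real.sqrt_nonneg _
  have hw2 : w ^ 2 = ρ ^ 2 - (‖z‖ ^ 2 - τ ^ 2) := Real.sq_sqrt (by nlinarith [sq_nonneg τ])
  have hyx : y = x + z := by rw [hz]; abel
  have hline : ∀ k ∈ {t : ℝ | x + t • u ∈ E},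
      Set.Icc (k - w) (k + w) ⊆ {t : ℝ | y + (t - τ) • u ∈ A} := by
    intro k hk t ht
    refine h _ hk ?_
    have h1 : y + (t - τ) • u - (x + k • u) = z + (t - k - τ) • u := by
      rw [hyx]; module
    rw [mem_closedBall, dist_eq_norm, h1]
    refine (abs_le_of_sq_le_sq' ?_ hρ).2
    rw [norm_add_smul_sq hu, ← hτ]
    have : |t - k| ≤ w := abs_le.2 ⟨by linarith [ht.1], by linarith [ht.2]⟩
    have : (t - k) ^ 2 ≤ w ^ 2 := sq_le_sq' (abs_le.1 this).1 (abs_le.1 this).2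
    nlinarith
  have hK : IsCompact {t : ℝ | x + t • u ∈ E} :=
    isCompact_Icc.of_isClosed_subset
      (hE.isClosed.preimage (by fun_prop : Continuous fun t : ℝ => x + t • u))
      (line_subset_Icc hu hRE x)
  have hvol := volume_add_le_of_Icc_subset hK ⟨s, hs⟩ hw hline
  have hshift : volume {t : ℝ | y + (t - τ) • u ∈ A} = volume {t : ℝ | y + t • u ∈ A} := by
    rw [← volume_line_add_smul u A y (-τ)]
    congr 1
    ext t
    rw [Set.mem_ofPred_eq, Set.mem_ofPred_eq]
    congr! 1
    module
  rw [hshift] at hvol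
  have hlen : steinerLen u E x + 2 * w ≤ steinerLen u A y := by
    have := ENNReal.toReal_mono (volume_line_ne_top hu hR y) hvol
    rwa [ENNReal.toReal_add (volume_line_ne_top hu hRE x) ENNReal.ofReal_ne_top,
      ENNReal.toReal_ofReal (by linarith)] at this
  refine (mem_steiner_iff hu).2 ⟨?_, ?_⟩
  · exact ⟨s - τ, hline s hs ⟨by linarith, by linarith⟩⟩
  · have : inner ℝ u y = inner ℝ u x + τ := by rw [hyx, inner_add_right]
    rw [this]
    linarith [abs_add_le (inner ℝ u x) τ]

/-! ### A direction with a quantitative gain -/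

lemma lintegral_volume_inter_translate {n : ℕ} {P Q : Set (EuclideanSpace ℝ (Fin n))}
    (hP : MeasurableSet P) (hQ : MeasurableSet Q) :
    ∫⁻ v, volume {y | y ∈ Q ∧ y + v ∈ P} = volume Q * volume P := by
  set T : Set (EuclideanSpace ℝ (Fin n) × EuclideanSpace ℝ (Fin n)) :=
    {p | p.2 ∈ Q ∧ p.2 + p.1 ∈ P} with hT
  have hTm : MeasurableSet T :=
    (measurable_snd hQ).inter ((measurable_snd.add measurable_fst) hP)
  have h1 := Measure.prod_apply (μ := volume) (ν := volume) hTm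
  rw [Measure.prod_apply_symm hTm] at h1
  refine h1.symm.trans ?_
  rw [mul_comm, ← lintegral_indicator_const hQ]
  refine lintegral_congr fun y => ?_
  by_cases hy : y ∈ Q
  · rw [Set.indicator_of_mem hy, ← measure_preimage_add volume y P]
    congr 1
    ext v
    exact and_iff_right hy
  · rw [Set.indicator_of_notMem hy]
    convert measure_empty (μ := volume)
    ext v
    simp only [Set.mem_preimage, Set.mem_empty_iff_false, iff_false]
    exact fun h => hy h.1

lemma exists_volume_inter_translate_ge {n : ℕ} {P Q : Set (EuclideanSpace ℝ (Fin n))} {R s : ℝ}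
    (hP : MeasurableSet P) (hQ : MeasurableSet Q) (hPR : P ⊆ closedBall 0 R)
    (hQs : Q ⊆ closedBall 0 s) (hP0 : volume P ≠ 0) (hQ0 : volume Q ≠ 0) :
    ∃ v, volume Q * volume P ≤
      volume {y | y ∈ Q ∧ y + v ∈ P} *
        volume (closedBall (0 : EuclideanSpace ℝ (Fin n)) (R + s)) := by
  set C := volume (closedBall (0 : EuclideanSpace ℝ (Fin n)) (R + s)) with hC
  have hsupp : ∀ v ∉ closedBall (0 : EuclideanSpace ℝ (Fin n)) (R + s),
      volume {y | y ∈ Q ∧ y + v ∈ P} = 0 := by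
    intro v hv
    convert measure_empty (μ := volume)
    ext y
    simp only [Set.mem_ofPred_eq, Set.mem_empty_iff_false, iff_false]
    rintro ⟨hy, hyv⟩
    refine hv ?_
    have h1 : ‖y‖ ≤ s := by simpa using hQs hy
    have h2 : ‖y + v‖ ≤ R := by simpa using hPR hyv
    have h3 := norm_sub_le (y + v) y
    rw [add_sub_cancel_left] at h3
    rw [mem_closedBall_zero_iff]
    linarith
  have hint := lintegral_volume_inter_translate hP hQ
  have hset : ∫⁻ v in closedBall 0 (R + s), volume {y | y ∈ Q ∧ y + v ∈ P} =
      volume Q * volume P := by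
    rw [← hint, ← lintegral_indicator measurableSet_closedBall]
    refine lintegral_congr fun v => ?_
    by_cases hv : v ∈ closedBall (0 : EuclideanSpace ℝ (Fin n)) (R + s)
    · rw [Set.indicator_of_mem hv]
    · rw [Set.indicator_of_notMem hv, hsupp v hv]
  have hC0 : C ≠ 0 := by
    intro h0
    rw [setLIntegral_measure_zero _ _ h0] at hset
    exact mul_ne_zero hQ0 hP0 hset.symm
  have hCtop : C ≠ ⊤ := measure_closedBall_lt_top.ne
  have hfin : volume Q * volume P ≠ ⊤ :=
    ENNReal.mul_ne_top (measure_ne_top_of_subset hQs measure_closedBall_lt_top.ne)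
      (measure_ne_top_of_subset hPR measure_closedBall_lt_top.ne)
  obtain ⟨v, -, hv⟩ := exists_setLAverage_le (f := fun v => volume {y | y ∈ Q ∧ y + v ∈ P}) hC0
    measurableSet_closedBall.nullMeasurableSet (hset ▸ hfin)
  rw [setLAverage_eq, hset, ENNReal.div_le_iff hC0 hCtop] at hv
  exact ⟨v, hv⟩

lemma measureReal_steiner_sdiff_add_le {n : ℕ} {u : EuclideanSpace ℝ (Fin n)}
    (hu : ‖u‖ = 1) {A W : Set (EuclideanSpace ℝ (Fin n))} (hA : IsCompact A) {s c : ℝ}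
    (hW : MeasurableSet W) (hWB : W ⊆ closedBall 0 s \ A)
    (hWA : ∀ w ∈ W, w + c • u ∈ A \ closedBall 0 s) :
    volume.real (steiner u A \ closedBall 0 s) + volume.real W ≤
      volume.real (A \ closedBall 0 s) := by
  have hS := isCompact_steiner hu hA
  have hfin : ∀ {K T : Set (EuclideanSpace ℝ (Fin n))}, IsCompact K → T ⊆ K → volume T ≠ ⊤ :=
    fun hK hT => measure_ne_top_of_subset hT hK.measure_lt_top.ne
  have hWfin : volume W ≠ ⊤ :=
    hfin (isCompact_closedBall 0 s) (hWB.trans Set.sdiff_subset)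
  have h1 := volume_inter_add_le_volume_steiner_inter hu hA hW hWB hWA
  have h2 := ENNReal.toReal_mono (hfin hS Set.inter_subset_left) h1
  rw [ENNReal.toReal_add (hfin hA Set.inter_subset_left) hWfin] at h2
  have h3 := congrArg ENNReal.toReal (volume_steiner hu hA)
  rw [← measure_inter_add_sdiff A (measurableSet_closedBall (x := 0) (ε := s)),
    ← measure_inter_add_sdiff (steiner u A) (measurableSet_closedBall (x := 0) (ε := s)),
    ENNReal.toReal_add (hfin hA Set.inter_subset_left) (hfin hA Set.sdiff_subset),
    ENNReal.toReal_add (hfin hS Set.inter_subset_left) (hfin hS Set.sdiff_subset)] at h3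
  simp only [measureReal_def]
  linarith

lemma measureReal_steiner_sdiff_le {n : ℕ} {u : EuclideanSpace ℝ (Fin n)}
    (hu : ‖u‖ = 1) {A : Set (EuclideanSpace ℝ (Fin n))} (hA : IsCompact A) (s : ℝ) :
    volume.real (steiner u A \ closedBall 0 s) ≤ volume.real (A \ closedBall 0 s) := by
  simpa using measureReal_steiner_sdiff_add_le (W := ∅) (c := 0) (s := s) hu hA
    MeasurableSet.empty (Set.empty_subset _) (by simp)

lemma exists_measureReal_steiner_sdiff_le {n : ℕ} (hn : 2 ≤ n) {R s : ℝ}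
    {A : Set (EuclideanSpace ℝ (Fin n))} (hA : IsCompact A) (hAR : A ⊆ closedBall 0 R)
    (hvol : volume A = volume (closedBall (0 : EuclideanSpace ℝ (Fin n)) s)) :
    ∃ u : EuclideanSpace ℝ (Fin n), ‖u‖ = 1 ∧
      volume.real (steiner u A \ closedBall 0 s) ≤ volume.real (A \ closedBall 0 s) -
        volume.real (A \ closedBall 0 s) ^ 2 /
          volume.real (closedBall (0 : EuclideanSpace ℝ (Fin n)) (R + s)) := by
  set B := closedBall (0 : EuclideanSpace ℝ (Fin n)) s with hB
  have hAm := hA.measurableSet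
  have hBm : MeasurableSet B := measurableSet_closedBall
  have hBfin : volume B ≠ ⊤ := measure_closedBall_lt_top.ne
  have hPQ : volume (B \ A) = volume (A \ B) := by
    have h1 := measure_inter_add_sdiff A hBm (μ := volume)
    have h2 := measure_inter_add_sdiff B hAm (μ := volume)
    rw [hvol, ← h2, Set.inter_comm] at h1
    exact ((ENNReal.add_right_inj
      (measure_ne_top_of_subset Set.inter_subset_left hBfin)).1 h1).symm
  by_cases h0 : volume (A \ B) = 0
  · refine ⟨EuclideanSpace.single ⟨0, by omega⟩ 1, by simp, ?_⟩
    have := measureReal_steiner_sdiff_le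
      (u := EuclideanSpace.single (⟨0, by omega⟩ : Fin n) (1 : ℝ)) (by simp) hA s
    rw [← hB] at this
    simpa [measureReal_def, h0] using this
  obtain ⟨v, hv⟩ := exists_volume_inter_translate_ge (hAm.diff hBm) (hBm.diff hAm)
    (Set.sdiff_subset.trans hAR) (Set.sdiff_subset : B \ A ⊆ B) h0 (hPQ ▸ h0)
  rw [hPQ] at hv
  set C := volume (closedBall (0 : EuclideanSpace ℝ (Fin n)) (R + s)) with hC
  set W := {y | y ∈ B \ A ∧ y + v ∈ A \ B} with hW
  have hWm : MeasurableSet W :=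
    (hBm.diff hAm).inter ((measurable_id.add_const v) (hAm.diff hBm))
  have hCtop : C ≠ ⊤ := measure_closedBall_lt_top.ne
  have hWfin : volume W ≠ ⊤ :=
    measure_ne_top_of_subset (fun y hy => hy.1.1) hBfin
  have hWC : volume W * C ≠ 0 := fun h => mul_ne_zero h0 h0 (le_zero_iff.1 (h ▸ hv))
  have hC0 : 0 < C.toReal := ENNReal.toReal_pos (right_ne_zero_of_mul hWC) hCtop
  have hv0 : v ≠ 0 := by
    rintro rfl
    obtain ⟨y, hy⟩ := nonempty_of_measure_ne_zero (left_ne_zero_of_mul hWC)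
    exact hy.1.2 (by simpa using hy.2.1)
  have hu : ‖‖v‖⁻¹ • v‖ = 1 := by
    rw [norm_smul, norm_inv, norm_norm, inv_mul_cancel₀ (norm_ne_zero_iff.2 hv0)]
  have hvu : ‖v‖ • ‖v‖⁻¹ • v = v := smul_inv_smul₀ (norm_ne_zero_iff.2 hv0) v
  have hgain := measureReal_steiner_sdiff_add_le (s := s) (c := ‖v‖) hu hA hWm
    (fun y hy => hy.1) (fun y hy => by rw [hvu]; exact hy.2)
  refine ⟨_, hu, ?_⟩
  have hsq := ENNReal.toReal_mono (ENNReal.mul_ne_top hWfin hCtop) hv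
  rw [ENNReal.toReal_mul, ENNReal.toReal_mul] at hsq
  have : volume.real (A \ B) ^ 2 / C.toReal ≤ volume.real W := by
    rw [div_le_iff₀ hC0, sq]
    exact hsq
  rw [measureReal_def volume (closedBall 0 (R + s))]
  linarith

/-! ### Balls of prescribed volume -/

lemma exists_volume_closedBall_eq {n : ℕ} (hn : 2 ≤ n) {V : ENNReal} (hV : V ≠ ⊤) :
    ∃ r : ℝ, 0 ≤ r ∧ volume (closedBall (0 : EuclideanSpace ℝ (Fin n)) r) = V := by
  set c := volume (closedBall (0 : EuclideanSpace ℝ (Fin n)) 1) with hc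
  have hc0 : c ≠ 0 := (measure_closedBall_pos volume 0 one_pos).ne'
  have hctop : c ≠ ⊤ := measure_closedBall_lt_top.ne
  have hq : V / c ≠ ⊤ := ENNReal.div_ne_top hV hc0
  refine ⟨(V / c).toReal ^ ((n : ℝ)⁻¹), by positivity, ?_⟩
  rw [Measure.addHaar_closedBall' volume _ (by positivity), finrank_euclideanSpace_fin,
    Real.rpow_inv_natCast_pow ENNReal.toReal_nonneg (by omega), ENNReal.ofReal_toReal hq,
    ENNReal.div_mul_cancel hc0 hctop]

lemma exists_ball_subset_closedBall_sdiff {V : Type*} [NormedAddCommGroup V] [NormedSpace ℝ V]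
    {x : V} {s ρ : ℝ} (hs : 0 ≤ s) (hx : s < ‖x‖) :
    ∃ y, ball y (ρ / 2) ⊆ closedBall x ρ \ closedBall 0 s := by
  rcases le_or_gt ρ 0 with hρ | hρ
  · exact ⟨0, by rw [ball_eq_empty.2 (by linarith)]; exact Set.empty_subset _⟩
  have hx0 : 0 < ‖x‖ := hs.trans_lt hx
  have hnorm : ‖(ρ / 2 / ‖x‖) • x‖ = ρ / 2 := by
    rw [norm_smul, Real.norm_of_nonneg (by positivity), div_mul_cancel₀ _ hx0.ne']
  refine ⟨x + (ρ / 2 / ‖x‖) • x, fun z hz => ⟨?_, ?_⟩⟩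
  · rw [mem_ball] at hz
    have h1 := dist_triangle z (x + (ρ / 2 / ‖x‖) • x) x
    rw [dist_self_add_left, hnorm] at h1
    rw [mem_closedBall]
    linarith
  · rw [mem_ball, dist_eq_norm] at hz
    have h1 : ‖x + (ρ / 2 / ‖x‖) • x‖ = ‖x‖ + ρ / 2 := by
      have : x + (ρ / 2 / ‖x‖) • x = (1 + ρ / 2 / ‖x‖) • x := by module
      rw [this, norm_smul, Real.norm_of_nonneg (by positivity), add_mul, one_mul,
        div_mul_cancel₀ _ hx0.ne']
    have h2 := norm_sub_norm_le (x + (ρ / 2 / ‖x‖) • x) z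
    rw [norm_sub_rev] at h2
    rw [mem_closedBall_zero_iff]
    linarith

lemma exists_hausdorffDist_closedBall_le {n : ℕ} {r : ℝ} (hr : 0 < r) {ε : ℝ} (hε : 0 < ε) :
    ∃ δ > 0, ∀ E : Set (EuclideanSpace ℝ (Fin n)), MeasurableSet E →
      volume E = volume (closedBall (0 : EuclideanSpace ℝ (Fin n)) r) →
      E ⊆ closedBall 0 (r + δ) → hausdorffDist E (closedBall 0 r) ≤ ε := by
  set m := r * (ε / 2) / (r + ε / 2) with hm
  have hm0 : 0 < m := by positivity
  have hmε : m ≤ ε / 2 := by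
    rw [hm, div_le_iff₀ (by positivity)]
    nlinarith
  have hlim := tendsto_measure_cthickening_of_isCompact (μ := volume)
    (isCompact_closedBall (0 : EuclideanSpace ℝ (Fin n)) r)
  have hlt : volume (closedBall (0 : EuclideanSpace ℝ (Fin n)) r) <
      volume (closedBall (0 : EuclideanSpace ℝ (Fin n)) r) +
        volume (ball (0 : EuclideanSpace ℝ (Fin n)) m) :=
    ENNReal.lt_add_right measure_closedBall_lt_top.ne (measure_ball_pos volume 0 hm0).ne'
  have hev := (hlim.mono_left (nhdsWithin_le_nhds (s := Set.Ioi 0))).eventually_lt_const hlt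
  obtain ⟨δ, hδvol, hδ0, hδε⟩ := (hev.and (Ioc_mem_nhdsGT hε)).exists
  refine ⟨δ, hδ0, fun E hEm hEvol hEsub => hausdorffDist_le_of_mem_dist hε.le ?_ ?_⟩
  · intro x hx
    have hxr : ‖x‖ ≤ r + δ := by simpa using hEsub hx
    have hδ0' : 0 < δ := hδ0
    refine ⟨(r / (r + δ)) • x, ?_, ?_⟩
    · rw [mem_closedBall_zero_iff, norm_smul, Real.norm_of_nonneg (by positivity),
        div_mul_eq_mul_div, div_le_iff₀ (by positivity)]
      exact mul_le_mul_of_nonneg_left hxr hr.le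
    · have h1 : x - (r / (r + δ)) • x = (δ / (r + δ)) • x := by
        have : δ / (r + δ) = 1 - r / (r + δ) := by field_simp; ring
        rw [this]; module
      rw [dist_eq_norm, h1, norm_smul, Real.norm_of_nonneg (by positivity),
        div_mul_eq_mul_div, div_le_iff₀ (by positivity)]
      exact mul_le_mul hδε hxr (norm_nonneg _) hε.le
  · intro p hp
    have hpr : ‖p‖ ≤ r := by simpa using hp
    set q := (r / (r + ε / 2)) • p with hq
    have hqr : ‖q‖ ≤ r - m := by
      have : r - m = r / (r + ε / 2) * r := by rw [hm]; field_simp; ring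
      rw [this, hq, norm_smul, Real.norm_of_nonneg (by positivity)]
      gcongr
    have hpq : dist p q ≤ m := by
      have h1 : p - q = (ε / 2 / (r + ε / 2)) • p := by
        have : ε / 2 / (r + ε / 2) = 1 - r / (r + ε / 2) := by field_simp; ring
        rw [this, hq]; module
      have h2 : m = ε / 2 / (r + ε / 2) * r := by rw [hm]; ring
      rw [dist_eq_norm, h1, norm_smul, Real.norm_of_nonneg (by positivity), h2]
      gcongr
    have hmeet : ¬ Disjoint E (ball q m) := by
      intro hdisj
      have hsub : E ∪ ball q m ⊆ cthickening δ (closedBall 0 r) := by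
        rw [cthickening_closedBall hδ0.le hr.le, add_comm]
        refine Set.union_subset hEsub fun z hz => ?_
        rw [mem_ball, dist_eq_norm] at hz
        have h3 := norm_le_norm_add_norm_sub' z q
        have hδ0' : 0 < δ := hδ0
        rw [mem_closedBall_zero_iff]
        linarith
      have h4 := measure_mono (μ := volume) hsub
      rw [measure_union hdisj measurableSet_ball, hEvol, Measure.addHaar_ball_center] at h4
      exact absurd hδvol h4.not_gt
    obtain ⟨y, hyE, hyq⟩ := Set.not_disjoint_iff.1 hmeet
    refine ⟨y, hyE, ?_⟩
    rw [mem_ball, dist_comm] at hyq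
    linarith [dist_triangle p q y]

/-! ### Simultaneous symmetrization of the parallel bodies -/

lemma exists_lt_of_frequent_quadratic_drop {a : ℕ → ℝ} (ha : Antitone a) (h0 : ∀ i, 0 ≤ a i)
    {C : ℝ} (hC : 0 < C) (hdrop : ∀ N, ∃ i ≥ N, a (i + 1) ≤ a i - a i ^ 2 / C)
    {η : ℝ} (hη : 0 < η) : ∃ i, a i < η := by
  by_contra! hcon
  have hlim := tendsto_atTop_ciInf ha ⟨0, by rintro _ ⟨i, rfl⟩; exact h0 i⟩
  have hdiff := hlim.sub (hlim.comp (tendsto_add_atTop_nat 1))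
  rw [sub_self] at hdiff
  obtain ⟨N, hN⟩ := eventually_atTop.1
    (hdiff.eventually_lt_const (show (0 : ℝ) < η ^ 2 / C by positivity))
  obtain ⟨i, hi, hid⟩ := hdrop N
  have h1 := hN i hi
  have h2 : η ^ 2 / C ≤ a i ^ 2 / C := by
    have := hcon i
    gcongr
  simp only [Function.comp_apply] at h1
  linarith

lemma exists_directions_measureReal_sdiff_lt {n : ℕ} (hn : 2 ≤ n)
    {A : ℕ → Set (EuclideanSpace ℝ (Fin n))} {R : ℝ} {s : ℕ → ℝ}
    (hA : ∀ m, IsCompact (A m)) (hAR : ∀ m, A m ⊆ closedBall 0 R)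
    (hR : ∀ m, 0 < R + s m)
    (hvol : ∀ m, volume (A m) = volume (closedBall (0 : EuclideanSpace ℝ (Fin n)) (s m))) :
    ∃ u : ℕ → EuclideanSpace ℝ (Fin n), (∀ i, ‖u i‖ = 1) ∧
      ∃ F : ℕ → ℕ → Set (EuclideanSpace ℝ (Fin n)),
        F 0 = A ∧ (∀ i m, F (i + 1) m = steiner (u i) (F i m)) ∧
        (∀ i m, IsCompact (F i m)) ∧
        ∀ m, ∀ η > 0, ∃ i, volume.real (F i m \ closedBall 0 (s m)) < η := by
  have hpick : ∀ (K : Set (EuclideanSpace ℝ (Fin n))) (t : ℝ),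
      ∃ u : EuclideanSpace ℝ (Fin n), ‖u‖ = 1 ∧
      (IsCompact K → K ⊆ closedBall 0 R →
        volume K = volume (closedBall (0 : EuclideanSpace ℝ (Fin n)) t) →
        volume.real (steiner u K \ closedBall 0 t) ≤ volume.real (K \ closedBall 0 t) -
          volume.real (K \ closedBall 0 t) ^ 2 /
            volume.real (closedBall (0 : EuclideanSpace ℝ (Fin n)) (R + t))) := by
    intro K t
    by_cases h : IsCompact K ∧ K ⊆ closedBall 0 R ∧
        volume K = volume (closedBall (0 : EuclideanSpace ℝ (Fin n)) t)
    · obtain ⟨u, hu, hgain⟩ := exists_measureReal_steiner_sdiff_le hn h.1 h.2.1 h.2.2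
      exact ⟨u, hu, fun _ _ _ => hgain⟩
    · exact ⟨EuclideanSpace.single ⟨0, by omega⟩ 1, by simp,
        fun h1 h2 h3 => absurd ⟨h1, h2, h3⟩ h⟩
  choose pick hunit hgain using hpick
  let F : ℕ → ℕ → Set (EuclideanSpace ℝ (Fin n)) := fun i => Nat.rec A
    (fun i X m => steiner (pick (X i.unpair.1) (s i.unpair.1)) (X m)) i
  let u : ℕ → EuclideanSpace ℝ (Fin n) := fun i => pick (F i i.unpair.1) (s i.unpair.1)
  have hstep : ∀ i m, F (i + 1) m = steiner (u i) (F i m) := fun i m => rfl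
  have hu : ∀ i, ‖u i‖ = 1 := fun i => hunit _ _
  have hinv : ∀ i m, IsCompact (F i m) ∧ F i m ⊆ closedBall 0 R ∧
      volume (F i m) = volume (closedBall (0 : EuclideanSpace ℝ (Fin n)) (s m)) := by
    intro i
    induction i with
    | zero => exact fun m => ⟨hA m, hAR m, hvol m⟩
    | succ i ih =>
      intro m
      obtain ⟨h1, h2, h3⟩ := ih m
      rw [hstep]
      exact ⟨isCompact_steiner (hu i) h1, steiner_subset_closedBall (hu i) h2,
        (volume_steiner (hu i) h1).trans h3⟩
  refine ⟨u, hu, F, rfl, hstep, fun i m => (hinv i m).1, fun m η hη => ?_⟩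
  refine exists_lt_of_frequent_quadratic_drop
    (a := fun i => volume.real (F i m \ closedBall 0 (s m)))
    (C := volume.real (closedBall (0 : EuclideanSpace ℝ (Fin n)) (R + s m)))
    (antitone_nat_of_succ_le fun i => ?_) (fun i => measureReal_nonneg) ?_ (fun N => ?_) hη
  · rw [hstep]
    exact measureReal_steiner_sdiff_le (hu i) (hinv i m).1 (s m)
  · exact ENNReal.toReal_pos (measure_closedBall_pos volume 0 (hR m)).ne'
      measure_closedBall_lt_top.ne
  · refine ⟨Nat.pair m N, Nat.right_le_pair m N, ?_⟩
    obtain ⟨h1, h2, h3⟩ := hinv (Nat.pair m N) m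
    have := hgain _ _ h1 h2 h3
    simpa [hstep, u] using this

/-- For a compact set `E ⊆ ℝⁿ` (`n ≥ 2`) with nonempty interior there is a sequence of
unit directions whose successive Steiner symmetrizations of `E` admit a subsequence
converging, in the Hausdorff distance, to the origin-centered closed ball of the same
Lebesgue measure as `E`. -/
theorem stmt0 (n : ℕ) (hn : 2 ≤ n) (E : Set (EuclideanSpace ℝ (Fin n)))
    (hE : IsCompact E) (hint : (interior E).Nonempty) :
    ∃ u : ℕ → EuclideanSpace ℝ (Fin n), (∀ i, ‖u i‖ = 1) ∧
      ∃ Eseq : ℕ → Set (EuclideanSpace ℝ (Fin n)),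
        Eseq 0 = E ∧ (∀ i, Eseq (i + 1) = steiner (u i) (Eseq i)) ∧
        ∃ r : ℝ, 0 ≤ r ∧
          volume (closedBall (0 : EuclideanSpace ℝ (Fin n)) r) = volume E ∧
          ∃ φ : ℕ → ℕ, StrictMono φ ∧
            Tendsto (fun j => hausdorffDist (Eseq (φ j)) (closedBall (0 : EuclideanSpace ℝ (Fin n)) r))
              atTop (nhds 0) := by
  have hE0 : volume E ≠ 0 := (Measure.measure_pos_of_nonempty_interior volume hint).ne'
  have hEtop : volume E ≠ ⊤ := hE.measure_lt_top.ne
  obtain ⟨r, hr0, hr⟩ := exists_volume_closedBall_eq hn hEtop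
  have hr1 : 0 < r := by
    refine hr0.lt_of_ne fun h => hE0 ?_
    have : Nonempty (Fin n) := ⟨⟨0, by omega⟩⟩
    rw [← hr, ← h, closedBall_zero, measure_singleton]
  set ρ : ℕ → ℝ := fun m => 1 / (m + 1) with hρ
  have hρ0 : ∀ m, 0 < ρ m := fun m => Nat.one_div_pos_of_nat
  set A : ℕ → Set (EuclideanSpace ℝ (Fin n)) := fun m => cthickening (ρ m) E with hAdef
  have hAc : ∀ m, IsCompact (A m) := fun m => hE.cthickening
  obtain ⟨R₁, hR₁⟩ := (hE.cthickening (r := 1)).isBounded.subset_closedBall 0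
  have hAR : ∀ m, A m ⊆ closedBall 0 (max R₁ 1) := fun m =>
    ((cthickening_mono ((div_le_one (by positivity)).2 (by simp)) E).trans hR₁).trans
      (closedBall_subset_closedBall (le_max_left _ _))
  choose s hs0 hs using fun m =>
    exists_volume_closedBall_eq hn ((hAc m).measure_lt_top (μ := volume)).ne
  obtain ⟨u, hu, F, hF0, hFstep, hFc, hFlim⟩ := exists_directions_measureReal_sdiff_lt hn hAc hAR
    (fun m => add_pos_of_pos_of_nonneg (lt_max_of_lt_right one_pos) (hs0 m))
    (fun m => (hs m).symm)
  let Eseq : ℕ → Set (EuclideanSpace ℝ (Fin n)) :=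
    fun i => Nat.rec E (fun i X => steiner (u i) X) i
  have hEstep : ∀ i, Eseq (i + 1) = steiner (u i) (Eseq i) := fun i => rfl
  have hinv : ∀ i, IsCompact (Eseq i) ∧ volume (Eseq i) = volume E ∧
      ∀ m, ∀ x ∈ Eseq i, closedBall x (ρ m) ⊆ F i m := by
    intro i
    induction i with
    | zero =>
      refine ⟨hE, rfl, fun m x hx => ?_⟩
      rw [hF0]
      exact closedBall_subset_cthickening hx _
    | succ i ih =>
      obtain ⟨h1, h2, h3⟩ := ih
      rw [hEstep]
      refine ⟨isCompact_steiner (hu i) h1, (volume_steiner (hu i) h1).trans h2, fun m => ?_⟩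
      rw [hFstep]
      exact closedBall_subset_steiner (hu i) h1 (hFc i m) (h3 m)
  have hsub : ∀ δ > 0, ∃ N, ∀ i ≥ N, Eseq i ⊆ closedBall 0 (r + δ) := by
    intro δ hδ
    have hlim : Tendsto (fun m => volume (closedBall (0 : EuclideanSpace ℝ (Fin n)) (s m)))
        atTop (nhds (volume (closedBall (0 : EuclideanSpace ℝ (Fin n)) r))) := by
      simp only [hs, hr]
      exact (tendsto_measure_cthickening_of_isCompact hE).comp
        tendsto_one_div_add_atTop_nhds_zero_nat
    have hlt : volume (closedBall (0 : EuclideanSpace ℝ (Fin n)) r) <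
        volume (closedBall (0 : EuclideanSpace ℝ (Fin n)) (r + δ)) := by
      rw [Measure.addHaar_closedBall' volume _ hr0,
        Measure.addHaar_closedBall' volume _ (by positivity : 0 ≤ r + δ),
        finrank_euclideanSpace_fin]
      refine (ENNReal.mul_lt_mul_iff_left (measure_closedBall_pos volume 0 one_pos).ne'
        measure_closedBall_lt_top.ne).2 ?_
      exact (ENNReal.ofReal_lt_ofReal_iff (by positivity)).2
        (pow_lt_pow_left₀ (by linarith) hr0 (by omega))
    obtain ⟨m, hm⟩ := (hlim.eventually_lt_const hlt).exists
    have hsm : s m ≤ r + δ := by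
      by_contra! h
      exact hm.not_ge (measure_mono (closedBall_subset_closedBall h.le))
    obtain ⟨N, hN⟩ := hFlim m (volume.real (ball (0 : EuclideanSpace ℝ (Fin n)) (ρ m / 2)))
      (ENNReal.toReal_pos (measure_ball_pos volume 0 (half_pos (hρ0 m))).ne'
        measure_ball_lt_top.ne)
    refine ⟨N, fun i hi => ?_⟩
    induction i, hi using Nat.le_induction with
    | base =>
      intro x hx
      refine closedBall_subset_closedBall hsm ?_
      rw [mem_closedBall_zero_iff]
      by_contra! hxs
      obtain ⟨y, hy⟩ := exists_ball_subset_closedBall_sdiff (ρ := ρ m) (hs0 m) hxs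
      refine hN.not_ge ?_
      rw [measureReal_def, ← Measure.addHaar_ball_center volume y]
      refine ENNReal.toReal_mono
        (measure_ne_top_of_subset Set.sdiff_subset (hFc N m).measure_lt_top.ne)
        (measure_mono (hy.trans ?_))
      exact Set.sdiff_subset_sdiff_left ((hinv N).2.2 m x hx)
    | succ i hi ih =>
      rw [hEstep]
      exact steiner_subset_closedBall (hu i) ih
  refine ⟨u, hu, Eseq, rfl, hEstep, r, hr0, hr, id, strictMono_id, ?_⟩
  refine Metric.tendsto_atTop.2 fun ε hε => ?_
  obtain ⟨δ, hδ, hdist⟩ := exists_hausdorffDist_closedBall_le (n := n) hr1 (half_pos hε)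
  obtain ⟨N, hN⟩ := hsub δ hδ
  refine ⟨N, fun i hi => ?_⟩
  have := hdist (Eseq i) (hinv i).1.measurableSet ((hinv i).2.1.trans hr.symm) (hN i hi)
  rw [Real.dist_eq, sub_zero, abs_of_nonneg hausdorffDist_nonneg]
  exact this.trans_lt (half_lt_self hε)
end

section
/- Suppose K, L ∈ K₀ⁿ, regarded as subsets of ℝ^{n-1} × ℝ. Then S(K*) ⊆ L* if and only if the following holds: whenever x' ∈ ℝ^{n-1} and t, s ∈ ℝ with t ≠ −s satisfy h_K(x', t) = 1 = h_K(x', −s), one has h_L(x', t/2 + s/2) ≤ 1. Here S denotes Steiner symmetrization about the hyperplane e_n^⊥. -/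
open MeasureTheory Filter Metric

/-- Support function `h_K(z) = max {z·y : y ∈ K}` of a set `K ⊆ ℝⁿ`. -/
noncomputable def suppFn {n : ℕ} (K : Set (EuclideanSpace ℝ (Fin n)))
    (z : EuclideanSpace ℝ (Fin n)) : ℝ :=
  sSup ((fun y => (inner ℝ z y : ℝ)) '' K)

/-- Polar body `K* = {x : x·z ≤ 1 for all z ∈ K}`. -/
def polarBody {n : ℕ} (K : Set (EuclideanSpace ℝ (Fin n))) :
    Set (EuclideanSpace ℝ (Fin n)) :=
  {x | ∀ z ∈ K, (inner ℝ x z : ℝ) ≤ 1}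

section PolarBody

variable {n : ℕ} {K : Set (EuclideanSpace ℝ (Fin n))} {u x' : EuclideanSpace ℝ (Fin n)}

theorem norm_lastDir (hn : n ≠ 0) : ‖lastDir n‖ = 1 := by
  simp [lastDir, hn]

theorem inner_le_suppFn (hK : IsCompact K) (x : EuclideanSpace ℝ (Fin n))
    {z : EuclideanSpace ℝ (Fin n)} (hz : z ∈ K) : inner ℝ x z ≤ suppFn K x :=
  le_csSup (hK.image (by fun_prop)).bddAbove ⟨z, hz, rfl⟩

theorem suppFn_le (hne : K.Nonempty) {x : EuclideanSpace ℝ (Fin n)} {c : ℝ}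
    (h : ∀ z ∈ K, inner ℝ x z ≤ c) : suppFn K x ≤ c := by
  refine csSup_le (hne.image _) ?_
  rintro _ ⟨z, hz, rfl⟩
  exact h z hz

theorem mem_polarBody_iff_suppFn_le_one (hK : IsCompact K) (hne : K.Nonempty)
    {x : EuclideanSpace ℝ (Fin n)} : x ∈ polarBody K ↔ suppFn K x ≤ 1 :=
  ⟨fun hx => suppFn_le hne hx, fun hx _ hz => (inner_le_suppFn hK x hz).trans hx⟩

theorem polarBody_eq_iInter (K : Set (EuclideanSpace ℝ (Fin n))) :
    polarBody K = ⋂ z ∈ K, {x | inner ℝ x z ≤ 1} := by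
  ext x
  simp [polarBody]

theorem isClosed_polarBody (K : Set (EuclideanSpace ℝ (Fin n))) : IsClosed (polarBody K) := by
  rw [polarBody_eq_iInter]
  exact isClosed_biInter fun z _ => isClosed_le (by fun_prop) continuous_const

theorem convex_polarBody (K : Set (EuclideanSpace ℝ (Fin n))) : Convex ℝ (polarBody K) := by
  intro x hx y hy a b ha hb hab z hz
  rw [inner_add_left, real_inner_smul_left, real_inner_smul_left]
  nlinarith [mul_le_mul_of_nonneg_left (hx z hz) ha, mul_le_mul_of_nonneg_left (hy z hz) hb]

/-- The polar body is a neighbourhood, along every line, of each point where the support function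
is less than one. -/
theorem exists_pos_add_smul_mem_polarBody (hK : IsCompact K) {x : EuclideanSpace ℝ (Fin n)}
    (hx : suppFn K x < 1) (u : EuclideanSpace ℝ (Fin n)) :
    ∃ ε > 0, ∀ r : ℝ, |r| ≤ ε → x + r • u ∈ polarBody K := by
  obtain ⟨C, hC, hKC⟩ := hK.isBounded.exists_pos_norm_le
  have hden : 0 < ‖u‖ * C + 1 := by positivity
  refine ⟨(1 - suppFn K x) / (‖u‖ * C + 1), div_pos (sub_pos.2 hx) hden, fun r hr z hz => ?_⟩
  have hru : |r| * (‖u‖ * C + 1) ≤ 1 - suppFn K x := (le_div_iff₀ hden).1 hr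
  have huz : r * inner ℝ u z ≤ |r| * (‖u‖ * C) := by
    calc r * inner ℝ u z ≤ |r * inner ℝ u z| := le_abs_self _
      _ = |r| * |inner ℝ u z| := abs_mul _ _
      _ ≤ |r| * (‖u‖ * C) := by
        gcongr
        exact (abs_real_inner_le_norm u z).trans (by gcongr; exact hKC z hz)
  rw [inner_add_left, real_inner_smul_left]
  nlinarith [inner_le_suppFn hK x hz, abs_nonneg r]

theorem isCompact_slice_polarBody (hK0 : 0 ∈ interior K) (hu : ‖u‖ = 1)
    (hx' : x' ∈ (Submodule.span ℝ {u})ᗮ) : IsCompact {t : ℝ | x' + t • u ∈ polarBody K} := by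
  obtain ⟨δ, hδ, hball⟩ := Metric.mem_nhds_iff.1 (mem_interior_iff_mem_nhds.1 hK0)
  have hmem : ∀ c : ℝ, |c| < δ → c • u ∈ K := fun c hc =>
    hball (by simpa [norm_smul, hu] using hc)
  have hinner : ∀ t c : ℝ, inner ℝ (x' + t • u) (c • u) = t * c := fun t c => by
    rw [inner_add_left, real_inner_smul_right, real_inner_smul_left, real_inner_smul_right,
      Submodule.mem_orthogonal_singleton_iff_inner_left.1 hx', real_inner_self_eq_norm_sq, hu]
    ring
  refine Metric.isCompact_of_isClosed_isBounded
    ((isClosed_polarBody K).preimage (by fun_prop)) ?_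
  refine (Metric.isBounded_Icc (-(2 / δ)) (2 / δ)).subset fun t ht => ?_
  have hpos := ht _ (hmem (δ / 2) (by rw [abs_of_pos (by positivity)]; linarith))
  have hneg := ht _ (hmem (-(δ / 2)) (by rw [abs_neg, abs_of_pos (by positivity)]; linarith))
  rw [hinner] at hpos hneg
  constructor
  · rw [neg_le, le_div_iff₀ hδ]
    linarith
  · rw [le_div_iff₀ hδ]
    linarith

theorem convex_slice_polarBody (K : Set (EuclideanSpace ℝ (Fin n)))
    (x' u : EuclideanSpace ℝ (Fin n)) : Convex ℝ {t : ℝ | x' + t • u ∈ polarBody K} := by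
  intro s hs t ht a b ha hb hab
  have h := convex_polarBody K hs ht ha hb hab
  have hcomb : a • (x' + s • u) + b • (x' + t • u) = x' + (a • s + b • t) • u := by
    obtain rfl : b = 1 - a := by linarith
    simp only [smul_eq_mul]
    module
  rwa [hcomb] at h

/-- Slices of the polar body are closed intervals. -/
theorem exists_slice_polarBody_eq_Icc (hK0 : 0 ∈ interior K) (hu : ‖u‖ = 1)
    (hx' : x' ∈ (Submodule.span ℝ {u})ᗮ) (hne : {t : ℝ | x' + t • u ∈ polarBody K}.Nonempty) :
    ∃ a b : ℝ, a ≤ b ∧ {t : ℝ | x' + t • u ∈ polarBody K} = Set.Icc a b := by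
  have h := eq_Icc_of_connected_compact ((convex_slice_polarBody K x' u).isConnected hne)
    (isCompact_slice_polarBody hK0 hu hx')
  exact ⟨_, _, Set.nonempty_Icc.1 (h ▸ hne), h⟩

theorem steinerLen_eq_of_slice_eq_Icc {E : Set (EuclideanSpace ℝ (Fin n))} {a b : ℝ} (hab : a ≤ b)
    (h : {t : ℝ | x' + t • u ∈ E} = Set.Icc a b) : steinerLen u E x' = b - a := by
  rw [steinerLen, h, Real.volume_Icc, ENNReal.toReal_ofReal (sub_nonneg.2 hab)]

theorem steinerProj_add_smul (hx' : x' ∈ (Submodule.span ℝ {u})ᗮ) (t : ℝ) :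
    steinerProj u (x' + t • u) = x' := by
  refine Submodule.eq_starProjection_of_mem_orthogonal hx' ?_
  rw [add_sub_cancel_left]
  exact Submodule.le_orthogonal_orthogonal _
    (Submodule.smul_mem _ t (Submodule.mem_span_singleton_self u))

theorem steinerProj_mem_orthogonal (u p : EuclideanSpace ℝ (Fin n)) :
    steinerProj u p ∈ (Submodule.span ℝ {u})ᗮ :=
  Submodule.coe_mem _

theorem exists_steinerProj_add_smul (u p : EuclideanSpace ℝ (Fin n)) :
    ∃ c : ℝ, steinerProj u p + c • u = p := by
  have h := (Submodule.span ℝ {u}).starProjection_add_starProjection_orthogonal p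
  obtain ⟨c, hc⟩ := Submodule.mem_span_singleton.1
    (Submodule.starProjection_apply_mem (Submodule.span ℝ {u}) p)
  refine ⟨c, ?_⟩
  rw [hc, add_comm]
  exact h

/-- At an endpoint of a slice of the polar body the support function equals one. -/
theorem suppFn_eq_one_of_frontier_slice (hK : IsCompact K) (hne : K.Nonempty) {c : ℝ}
    (hc : x' + c • u ∈ polarBody K)
    (hend : (∀ t, x' + t • u ∈ polarBody K → t ≤ c) ∨ ∀ t, x' + t • u ∈ polarBody K → c ≤ t) :
    suppFn K (x' + c • u) = 1 := by
  refine le_antisymm ((mem_polarBody_iff_suppFn_le_one hK hne).1 hc) (not_lt.1 fun hlt => ?_)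
  obtain ⟨ε, hε, hmem⟩ := exists_pos_add_smul_mem_polarBody hK hlt u
  have hshift : ∀ r : ℝ, |r| ≤ ε → x' + (c + r) • u ∈ polarBody K := fun r hr => by
    rw [add_smul, ← add_assoc]
    exact hmem r hr
  rcases hend with h | h
  · linarith [h _ (hshift ε (abs_of_pos hε).le)]
  · linarith [h _ (hshift (-ε) (by rw [abs_neg, abs_of_pos hε]))]

end PolarBody

/-- Lutwak–Yang–Zhang: for convex bodies `K, L` containing the origin in their interiors,
`S(K*) ⊆ L*` iff whenever `h_K(x',t) = 1 = h_K(x',-s)` with `t ≠ -s`, one has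
`h_L(x', t/2 + s/2) ≤ 1`. Here `S` is Steiner symmetrization about `e_n^⊥`. -/
theorem stmt7 (n : ℕ) (hn : 2 ≤ n)
    (K L : Set (EuclideanSpace ℝ (Fin n)))
    (hKcomp : IsCompact K) (hKconv : Convex ℝ K)
    (hK0 : (0 : EuclideanSpace ℝ (Fin n)) ∈ interior K)
    (hLcomp : IsCompact L) (hLconv : Convex ℝ L)
    (hL0 : (0 : EuclideanSpace ℝ (Fin n)) ∈ interior L) :
    steiner (lastDir n) (polarBody K) ⊆ polarBody L ↔
      ∀ x' ∈ (Submodule.span ℝ {lastDir n})ᗮ, ∀ t s : ℝ, t ≠ -s →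
        suppFn K (x' + t • lastDir n) = 1 →
        suppFn K (x' + (-s) • lastDir n) = 1 →
        suppFn L (x' + (t / 2 + s / 2) • lastDir n) ≤ 1 := by
  have hu : ‖lastDir n‖ = 1 := norm_lastDir (by omega)
  set u := lastDir n
  have hKne : K.Nonempty := ⟨0, interior_subset hK0⟩
  have hLne : L.Nonempty := ⟨0, interior_subset hL0⟩
  constructor
  · intro hsub x' hx' t s _ ht hs
    have htmem := (mem_polarBody_iff_suppFn_le_one hKcomp hKne).2 ht.le
    have hsmem := (mem_polarBody_iff_suppFn_le_one hKcomp hKne).2 hs.le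
    obtain ⟨a, b, hab, hslice⟩ := exists_slice_polarBody_eq_Icc hK0 hu hx' ⟨t, htmem⟩
    have htI : t ∈ Set.Icc a b := hslice ▸ htmem
    have hsI : -s ∈ Set.Icc a b := hslice ▸ hsmem
    refine (mem_polarBody_iff_suppFn_le_one hLcomp hLne).1 (hsub ?_)
    refine ⟨x', ⟨_, htmem, steinerProj_add_smul hx' t⟩, _, ?_, rfl⟩
    rw [steinerLen_eq_of_slice_eq_Icc hab hslice, abs_le]
    constructor <;> linarith [htI.1, htI.2, hsI.1, hsI.2]
  · intro H
    have hnondeg : ∀ x' ∈ (Submodule.span ℝ {u})ᗮ, ∀ a b : ℝ, a < b →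
        {t : ℝ | x' + t • u ∈ polarBody K} = Set.Icc a b →
        ∀ r : ℝ, |r| ≤ (b - a) / 2 → x' + r • u ∈ polarBody L := by
      intro x' hx' a b hab hslice r hr
      have hiff : ∀ t, x' + t • u ∈ polarBody K ↔ t ∈ Set.Icc a b := fun t => by
        rw [← hslice, Set.mem_ofPred_eq]
      have ha := suppFn_eq_one_of_frontier_slice hKcomp hKne
        ((hiff a).2 ⟨le_rfl, hab.le⟩) (.inr fun t ht => ((hiff t).1 ht).1)
      have hb := suppFn_eq_one_of_frontier_slice hKcomp hKne
        ((hiff b).2 ⟨hab.le, le_rfl⟩) (.inl fun t ht => ((hiff t).1 ht).2)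
      have hupper := H x' hx' b (-a) (by simpa using hab.ne') hb (by simpa using ha)
      have hlower := H x' hx' a (-b) (by simpa using hab.ne) ha (by simpa using hb)
      rw [← mem_polarBody_iff_suppFn_le_one hLcomp hLne] at hupper hlower
      refine (convex_slice_polarBody L x' u).ordConnected.out hlower hupper ?_
      have := abs_le.1 hr
      constructor <;> linarith [this.1, this.2]
    rintro _ ⟨_, ⟨p, hp, rfl⟩, r, hr, rfl⟩
    have hx' := steinerProj_mem_orthogonal u p
    obtain ⟨c, hc⟩ := exists_steinerProj_add_smul u p
    generalize steinerProj u p = x' at hx' hc hr ⊢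
    obtain ⟨a, b, hab, hslice⟩ :=
      exists_slice_polarBody_eq_Icc hK0 hu hx' ⟨c, by rwa [Set.mem_ofPred_eq, hc]⟩
    rw [steinerLen_eq_of_slice_eq_Icc hab hslice] at hr
    rcases hab.lt_or_eq with hlt | rfl
    · exact hnondeg x' hx' a b hlt hslice r hr
    obtain rfl : r = 0 := by simpa using hr
    rw [zero_smul, add_zero]
    -- The slice over `l • x'` with `0 < l < 1` is nondegenerate; let `l` tend to `1`.
    have hscaled : ∀ l ∈ Set.Ioo (0 : ℝ) 1, l • x' ∈ polarBody L := by
      intro l hl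
      have hlp : suppFn K (l • p) < 1 := by
        refine lt_of_le_of_lt (suppFn_le hKne fun z hz => ?_) hl.2
        rw [real_inner_smul_left]
        exact mul_le_of_le_one_right hl.1.le (hp z hz)
      obtain ⟨ε, hε, hmem⟩ := exists_pos_add_smul_mem_polarBody hKcomp hlp u
      have hlx' := Submodule.smul_mem _ l hx'
      have hline : ∀ d : ℝ, |d| ≤ ε → l • x' + (l * c + d) • u ∈ polarBody K := fun d hd => by
        convert hmem d hd using 1
        rw [← hc]
        module
      have h0 := hline 0 (by simpa using hε.le)
      have h1 := hline ε (abs_of_pos hε).le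
      obtain ⟨a', b', hab', hslice'⟩ := exists_slice_polarBody_eq_Icc hK0 hu hlx' ⟨_, h0⟩
      have h0I : l * c + 0 ∈ Set.Icc a' b' := hslice' ▸ h0
      have h1I : l * c + ε ∈ Set.Icc a' b' := hslice' ▸ h1
      have hlt : a' < b' := by linarith [h0I.1, h1I.2]
      simpa using hnondeg _ hlx' a' b' hlt hslice' 0 (by rw [abs_zero]; linarith)
    have hlim : Tendsto (fun l : ℝ => l • x') (nhdsWithin 1 (Set.Iio 1)) (nhds x') := by
      have hcont : Continuous fun l : ℝ => l • x' := by fun_prop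
      simpa using (hcont.tendsto 1).mono_left nhdsWithin_le_nhds
    exact (isClosed_polarBody L).mem_of_tendsto hlim
      (eventually_of_mem (Ioo_mem_nhdsLT one_pos) hscaled)
end

section
/- Let n ≥ 2, r > 0, and let U be a nonempty relatively open subset of the sphere rS^{n-1} = {x ∈ ℝⁿ : |x| = r}. Then there exist finitely many unit vectors v_1, …, v_m such that rS^{n-1} ⊆ ∪_{i=1}^m σ_{v_i}(U). -/
open MeasureTheory Filter Metric

/-- Reflection `σ_v(x) = x - 2(x·v)v` of `ℝⁿ` across the hyperplane `v^⊥`. -/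
noncomputable def reflHyp {n : ℕ} (v : EuclideanSpace ℝ (Fin n))
    (x : EuclideanSpace ℝ (Fin n)) : EuclideanSpace ℝ (Fin n) :=
  x - (2 * (inner ℝ x v : ℝ)) • v

theorem reflHyp_reflHyp {n : ℕ} {v : EuclideanSpace ℝ (Fin n)} (hv : ‖v‖ = 1)
    (x : EuclideanSpace ℝ (Fin n)) : reflHyp v (reflHyp v x) = x := by
  simp only [reflHyp, inner_sub_left, real_inner_smul_left, real_inner_self_eq_norm_sq, hv]
  module

theorem norm_reflHyp {n : ℕ} {v : EuclideanSpace ℝ (Fin n)} (hv : ‖v‖ = 1)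
    (x : EuclideanSpace ℝ (Fin n)) : ‖reflHyp v x‖ = ‖x‖ := by
  rw [← sq_eq_sq₀ (norm_nonneg _) (norm_nonneg _), reflHyp, norm_sub_sq_real, norm_smul, hv,
    real_inner_smul_right, mul_one, Real.norm_eq_abs, sq_abs]
  ring

theorem continuous_reflHyp {n : ℕ} (v : EuclideanSpace ℝ (Fin n)) : Continuous (reflHyp v) := by
  unfold reflHyp
  fun_prop

theorem exists_norm_eq_one_inner_eq_zero {n : ℕ} (hn : 2 ≤ n) (p : EuclideanSpace ℝ (Fin n)) :
    ∃ v : EuclideanSpace ℝ (Fin n), ‖v‖ = 1 ∧ inner ℝ p v = 0 := by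
  have hne : (Submodule.span ℝ {p})ᗮ ≠ ⊥ := by
    intro h
    rw [Submodule.orthogonal_eq_bot_iff] at h
    have h1 := finrank_span_le_card (R := ℝ) ({p} : Set (EuclideanSpace ℝ (Fin n)))
    rw [h, finrank_top, finrank_euclideanSpace_fin] at h1
    simp at h1
    omega
  obtain ⟨w, hw, hw0⟩ := Submodule.exists_mem_ne_zero_of_ne_bot hne
  refine ⟨‖w‖⁻¹ • w, norm_smul_inv_norm hw0, ?_⟩
  rw [real_inner_smul_right, Submodule.mem_orthogonal_singleton_iff_inner_right.1 hw, mul_zero]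

/-- In dimension at least two, any two vectors of equal norm are exchanged by a reflection. -/
theorem exists_reflHyp_eq {n : ℕ} (hn : 2 ≤ n) {x p : EuclideanSpace ℝ (Fin n)}
    (h : ‖x‖ = ‖p‖) : ∃ v : EuclideanSpace ℝ (Fin n), ‖v‖ = 1 ∧ reflHyp v x = p := by
  by_cases hxp : x = p
  · obtain ⟨v, hv, hpv⟩ := exists_norm_eq_one_inner_eq_zero hn p
    exact ⟨v, hv, by simp [reflHyp, hxp, hpv]⟩
  · have hne : x - p ≠ 0 := sub_ne_zero.2 hxp
    have hnorm : ‖x - p‖ ≠ 0 := norm_ne_zero_iff.2 hne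
    refine ⟨‖x - p‖⁻¹ • (x - p), norm_smul_inv_norm hne, ?_⟩
    have hinner : 2 * inner ℝ x (x - p) = ‖x - p‖ ^ 2 := by
      rw [norm_sub_sq_real, inner_sub_right, real_inner_self_eq_norm_sq, ← h]
      ring
    have hcoef : 2 * (‖x - p‖⁻¹ * inner ℝ x (x - p)) * ‖x - p‖⁻¹ = 1 := by
      field_simp
      exact hinner
    rw [reflHyp, real_inner_smul_right, smul_smul, hcoef, one_smul, sub_sub_cancel]

/-- Any nonempty relatively open subset `U` of the sphere `rS^{n-1}` admits finitely many
unit vectors `v_1, …, v_m` whose reflected copies `σ_{v_i}(U)` cover the whole sphere. -/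
theorem stmt11 (n : ℕ) (hn : 2 ≤ n) (r : ℝ) (hr : 0 < r)
    (U : Set (EuclideanSpace ℝ (Fin n))) (hUne : U.Nonempty)
    (hUopen : ∃ V : Set (EuclideanSpace ℝ (Fin n)),
      IsOpen V ∧ U = V ∩ sphere (0 : EuclideanSpace ℝ (Fin n)) r) :
    ∃ (m : ℕ) (v : Fin m → EuclideanSpace ℝ (Fin n)), (∀ i, ‖v i‖ = 1) ∧
      sphere (0 : EuclideanSpace ℝ (Fin n)) r ⊆ ⋃ i, reflHyp (v i) '' U := by
  obtain ⟨V, hV, rfl⟩ := hUopen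
  obtain ⟨p, hpV, hp⟩ := hUne
  obtain ⟨t, ht⟩ := (isCompact_sphere (0 : EuclideanSpace ℝ (Fin n)) r).elim_finite_subcover
    (fun v : {v : EuclideanSpace ℝ (Fin n) // ‖v‖ = 1} => reflHyp v.1 ⁻¹' V)
    (fun v => hV.preimage (continuous_reflHyp v.1)) (fun x hx => by
      obtain ⟨v, hv, hvx⟩ := exists_reflHyp_eq hn (x := x) (p := p)
        ((mem_sphere_zero_iff_norm.1 hx).trans (mem_sphere_zero_iff_norm.1 hp).symm)
      exact Set.mem_iUnion.2 ⟨⟨v, hv⟩, by simpa [hvx] using hpV⟩)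
  refine ⟨t.card, fun i => (t.equivFin.symm i).1.1, fun i => (t.equivFin.symm i).1.2, ?_⟩
  intro x hx
  obtain ⟨v, hvt, hvx⟩ := Set.mem_iUnion₂.1 (ht hx)
  refine Set.mem_iUnion.2 ⟨t.equivFin ⟨v, hvt⟩, ?_⟩
  simp only [Equiv.symm_apply_apply]
  refine ⟨reflHyp v.1 x, ⟨hvx, ?_⟩, reflHyp_reflHyp v.2 x⟩
  rw [mem_sphere_zero_iff_norm, norm_reflHyp v.2, mem_sphere_zero_iff_norm.1 hx]
end

section
/- Let n ≥ 2, let E ⊆ ℝⁿ be a compact set and u a unit vector. Then the Steiner symmetrization S_u E is a compact subset of ℝⁿ. -/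
open MeasureTheory Filter Metric

open scoped Pointwise

/-- The section of a compact set along a line is compact. -/
theorem isCompact_steinerSection {n : ℕ} {u : EuclideanSpace ℝ (Fin n)} (hu : u ≠ 0)
    {E : Set (EuclideanSpace ℝ (Fin n))} (hE : IsCompact E) (x : EuclideanSpace ℝ (Fin n)) :
    IsCompact {t : ℝ | x + t • u ∈ E} :=
  ((Homeomorph.addLeft x).isClosedEmbedding.comp
    (isClosedEmbedding_smul_left hu)).isCompact_preimage hE

/-- The set of base points whose line section of a compact set lies in a given open set is open. -/
theorem isOpen_setOf_steinerSection_subset {n : ℕ} {u : EuclideanSpace ℝ (Fin n)}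
    {E : Set (EuclideanSpace ℝ (Fin n))} (hE : IsCompact E) {U : Set ℝ} (hU : IsOpen U) :
    IsOpen {x : EuclideanSpace ℝ (Fin n) | {t : ℝ | x + t • u ∈ E} ⊆ U} := by
  have hclosed : IsClosed (E + (fun t : ℝ => t • (-u)) '' Uᶜ) :=
    (isClosedMap_smul_left (-u) _ hU.isClosed_compl).add_left_of_isCompact hE
  convert hclosed.isOpen_compl using 1
  ext x
  simp only [Set.mem_ofPred_eq, Set.mem_compl_iff, Set.mem_add, Set.mem_image]
  constructor
  · rintro h ⟨e, he, _, ⟨t, ht, rfl⟩, rfl⟩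
    exact ht (h (by simpa using he))
  · intro h t ht
    by_contra htU
    exact h ⟨x + t • u, ht, _, ⟨t, htU, rfl⟩, by simp⟩

/-- The length of the line sections of a compact set is upper semicontinuous. -/
theorem upperSemicontinuous_steinerLen {n : ℕ} {u : EuclideanSpace ℝ (Fin n)} (hu : u ≠ 0)
    {E : Set (EuclideanSpace ℝ (Fin n))} (hE : IsCompact E) :
    UpperSemicontinuous (steinerLen u E) := by
  intro x c hc
  have hfin (y : EuclideanSpace ℝ (Fin n)) : volume {t : ℝ | y + t • u ∈ E} ≠ ⊤ :=
    (isCompact_steinerSection hu hE y).measure_ne_top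
  obtain ⟨U, hxU, hU, hUc⟩ := Set.exists_isOpen_lt_of_lt _ _
    ((ENNReal.lt_ofReal_iff_toReal_lt (hfin x)).2 hc)
  filter_upwards [(isOpen_setOf_steinerSection_subset hE hU).mem_nhds hxU] with y hy
  exact (ENNReal.lt_ofReal_iff_toReal_lt (hfin y)).1 ((measure_mono hy).trans_lt hUc)

/-- The Steiner symmetrization of a compact set is compact. -/
theorem stmt13 (n : ℕ) (hn : 2 ≤ n) (E : Set (EuclideanSpace ℝ (Fin n)))
    (hE : IsCompact E) (u : EuclideanSpace ℝ (Fin n)) (hu : ‖u‖ = 1) :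
    IsCompact (steiner u E) := by
  have hu0 : u ≠ 0 := by
    rintro rfl
    simp at hu
  have husc := upperSemicontinuous_steinerLen hu0 hE
  have hproj : IsCompact (steinerProj u '' E) :=
    hE.image (by unfold steinerProj; fun_prop)
  obtain ⟨C, hC⟩ := (husc.upperSemicontinuousOn _).bddAbove_of_isCompact hproj
  have hclosed : IsClosed {p : EuclideanSpace ℝ (Fin n) × ℝ | 2 * |p.2| ≤ steinerLen u E p.1} :=
    husc.IsClosed_hypograph.preimage
      (f := fun p : EuclideanSpace ℝ (Fin n) × ℝ => (p.1, 2 * |p.2|)) (by fun_prop)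
  have hcompact := ((hproj.prod (isCompact_Icc (a := -(C / 2)) (b := C / 2))).inter_right
    hclosed).image (f := fun p => p.1 + p.2 • u) (by fun_prop)
  convert hcompact using 1
  ext x
  constructor
  · rintro ⟨x', hx', t, ht, rfl⟩
    have hlen : steinerLen u E x' ≤ C := hC (Set.mem_image_of_mem _ hx')
    refine ⟨(x', t), ⟨⟨hx', abs_le.1 (by linarith)⟩, ?_⟩, rfl⟩
    change 2 * |t| ≤ _
    linarith
  · rintro ⟨⟨x', t⟩, ⟨⟨hx', -⟩, ht⟩, rfl⟩
    change 2 * |t| ≤ steinerLen u E x' at ht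
    exact ⟨x', hx', t, by linarith, rfl⟩
end
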